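/- arXiv:1412.3701 — 2 statements merged into one kernel-verified Lean document; each statement's English description precedes it below -/
import Mathlib

section
/- Let L = L_p(A) for a deterministic parity automaton A over Σ_I × Σ_O using k colors. The following are equivalent: (1) Player O wins the delay game Γ_f(L) for some delay function f; (2) Player O wins Γ_f(L) for some constant delay function f with f(0) ≤ 2^{2|A|k + 2} + 2. -/
/-!
Write `n = |Q|` and let `k` be the number of colors. A winning strategy for an arbitrary delay
function is turned into one that looks ahead two blocks of length
`F = 2 ^ (2nk) + n (k + 1) ^ (2n)` (`blockLen`).

*Winning sets.* A set `S` of state–color pairs with a progress measure `θ` (a sequence of ordinals,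
as for parity games) is winning (`Win`) if after every long enough input block `w` Player O can
commit to a pair `(q, c) ∈ S` such that the pairs reachable from `q` via `w` are winning again, with
a measure that has progressed with respect to `c`. This is a coinductive notion, and the required
length may depend on `S` and `θ`. Given a winning strategy for some delay function, the pairs
reachable from the initial state via any nonempty word are winning (`IsCausal.exists_win`): as the
measure of a node of the game tree take its ranks, for odd `e`, in the relation `Below` of extending
a node with `e` the largest color in between, which is well-founded because the strategy wins.
Conversely, progress excludes an odd limit superior of the colors
(`Progress.even_of_isLargestRecurring`).

*A uniform block length.* The key fact is that blocks of length `F` are always long enough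
(`Win.exists_of_length_eq_blockLen`). Rank the colors by Player O's preference; being winning is
monotone under domination of sets of pairs. The first `2 ^ (2nk)` letters of a block can be pumped
to any length simultaneously for all the sets of states occurring in `S` with a color at least as
good as `c`: these sets form a chain, so for each state the effect of a word on them is a monotone
sequence of at most `k` numbers in `{0, …, k}`, of which there are at most `2 ^ (2k)`. Hence one of
these sets is still winning after the unpumped letters. The remaining letters single out one of its
states, each portion of `(k + 1) ^ (2n)` letters splitting off one state by pumping two sets at
once.

*The bound.* For `k ≥ 2` one has `n (k + 1) ^ (2n) ≤ 2 ^ (2nk)`, hence `2F ≤ 2 ^ (2nk + 2)`. For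
`k = 1` all words or no words are accepted, and no lookahead is needed.
-/

namespace DelayGames

/-- A delay function: positive in every round. -/
def IsDelay (f : ℕ → ℕ) : Prop := ∀ i, 1 ≤ f i

/-- A constant delay function: `f i = 1` for all `i > 0`. -/
def IsConstant (f : ℕ → ℕ) : Prop := ∀ i, 0 < i → f i = 1

section Games

variable {I O : Type*}

/-- `α` is the ω-word obtained by concatenating the blocks `u 0, u 1, u 2, …`:
every finite concatenation of initial blocks is a prefix of `α`. -/
def IsCat (u : ℕ → List I) (α : ℕ → I) : Prop :=
  ∀ i, ((List.range i).map u).flatten =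
    (List.range (((List.range i).map u).flatten.length)).map α

/-- The blocks of Player I have the lengths prescribed by the delay function. -/
def ValidBlocks (f : ℕ → ℕ) (u : ℕ → List I) : Prop := ∀ i, (u i).length = f i

/-- The play `(u, v)` is consistent with the strategy `τ` of Player O:
in every round, `v i` is prescribed by `τ` applied to `u 0 ⋯ u i`. -/
def ConsistentO (τ : List I → O) (u : ℕ → List I) (v : ℕ → O) : Prop :=
  ∀ i, v i = τ (((List.range (i + 1)).map u).flatten)

/-- The play `(u, v)` is consistent with the strategy `τ` of Player I:
in every round, `u i` is prescribed by `τ` applied to `v 0 ⋯ v (i-1)`. -/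
def ConsistentI (τ : List O → List I) (u : ℕ → List I) (v : ℕ → O) : Prop :=
  ∀ i, u i = τ ((List.range i).map v)

/-- Player O wins the delay game `Γ_f(L)`: she has a strategy such that every
consistent play (against blocks of the prescribed lengths) has its outcome in `L`. -/
def WinsO (f : ℕ → ℕ) (L : Set (ℕ → I × O)) : Prop :=
  ∃ τ : List I → O, ∀ u v α, ValidBlocks f u → ConsistentO τ u v → IsCat u α →
    (fun n => (α n, v n)) ∈ L

/-- Player I wins the delay game `Γ_f(L)`: he has a strategy respecting the
lengths prescribed by `f` such that no consistent play has its outcome in `L`. -/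
def WinsI (f : ℕ → ℕ) (L : Set (ℕ → I × O)) : Prop :=
  ∃ τ : List O → List I, (∀ w, (τ w).length = f w.length) ∧
    ∀ u v α, ConsistentI τ u v → IsCat u α → (fun n => (α n, v n)) ∉ L

/-- Projection of a winning condition to the first components. -/
def projL (L : Set (ℕ → I × O)) : Set (ℕ → I) :=
  {α | ∃ β : ℕ → O, (fun n => (α n, β n)) ∈ L}

end Games

/-- The prefix of length `k` of an ω-word. -/
def pre {A : Type*} (x : ℕ → A) (k : ℕ) : List A := (List.range k).map x

/-- `K · A^ω`: the ω-words having a finite prefix in `K`. -/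
def extOmega {A : Type*} (K : Set (List A)) : Set (ℕ → A) := {x | ∃ k, pre x k ∈ K}

/-- Nondeterministic automata with a complete transition function. -/
structure NA (Q A : Type*) where
  init : Q
  trans : Q → A → Set Q
  accept : Set Q
  complete : ∀ q a, (trans q a).Nonempty

namespace NA

variable {Q A : Type*} (M : NA Q A)

/-- The automaton is deterministic. -/
def Deterministic : Prop := ∀ q a, ∃ q', M.trans q a = {q'}

/-- The states reachable from a set of states after reading a finite word. -/
def reach (S : Set Q) (w : List A) : Set Q :=
  w.foldl (fun T a => ⋃ q ∈ T, M.trans q a) S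

/-- The finite words accepted by `M` (runs from the initial state ending in `accept`). -/
def Lstar : Set (List A) := {w | (M.reach {M.init} w ∩ M.accept).Nonempty}

/-- `ρ` is a run of `M` on the ω-word `x`. -/
def IsRun (x : ℕ → A) (ρ : ℕ → Q) : Prop :=
  ρ 0 = M.init ∧ ∀ n, ρ (n + 1) ∈ M.trans (ρ n) (x n)

/-- Reachability acceptance: some run visits an accepting state at least once. -/
def Lexists : Set (ℕ → A) := {x | ∃ ρ, M.IsRun x ρ ∧ ∃ n, ρ n ∈ M.accept}

/-- Safety acceptance: some run visits only accepting states. -/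
def Lforall : Set (ℕ → A) := {x | ∃ ρ, M.IsRun x ρ ∧ ∀ n, ρ n ∈ M.accept}

/-- A state is productive if an accepting state is reachable from it. -/
def Productive (q : Q) : Prop := ∃ w, (M.reach {q} w ∩ M.accept).Nonempty

/-- A state lies on a cycle. -/
def OnCycle (q : Q) : Prop := ∃ w : List A, w ≠ [] ∧ q ∈ M.reach {q} w

/-- An automaton is acyclic if every state on a cycle is non-productive. -/
def Acyclic : Prop := ∀ q, M.OnCycle q → ¬ M.Productive q

/-- A state is reachable from the initial state. -/
def ReachableState (q : Q) : Prop := ∃ w, q ∈ M.reach {M.init} w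

/-- `k` is the depth of the (acyclic) automaton `M`: the length of a longest
path from the initial state to an accepting state. -/
def HasDepth (k : ℕ) : Prop :=
  (∀ w ∈ M.Lstar, w.length ≤ k) ∧ ∃ w ∈ M.Lstar, w.length = k

end NA

/-- Projection of an automaton over `I × O` to the alphabet `I`. -/
def NA.projI {Q I O : Type*} [Nonempty O] (M : NA Q (I × O)) : NA Q I where
  init := M.init
  trans q a := ⋃ b : O, M.trans q (a, b)
  accept := M.accept
  complete q a := by
    obtain ⟨b⟩ := ‹Nonempty O›
    obtain ⟨q', hq'⟩ := M.complete q (a, b)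
    exact ⟨q', Set.mem_iUnion.2 ⟨b, hq'⟩⟩

/-- Deterministic parity automata. -/
structure DPA (Q A : Type*) where
  init : Q
  trans : Q → A → Q
  color : Q → ℕ

/-- The maximal value occurring infinitely often in the sequence `c` exists
and is even. -/
def MaxEvenInf (c : ℕ → ℕ) : Prop :=
  ∃ k, Even k ∧ {n | c n = k}.Infinite ∧ ∀ k', {n | c n = k'}.Infinite → k' ≤ k

/-- Deterministic finite automata (acceptors for finite words). -/
structure DFAcc (S A : Type*) where
  init : S
  trans : S → A → S
  accept : Set S

/-- The language of finite words accepted by a DFA. -/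
def DFAcc.lang {S A : Type*} (D : DFAcc S A) : Set (List A) :=
  {w | w.foldl D.trans D.init ∈ D.accept}

namespace DPA

variable {Q A : Type*} (M : DPA Q A)

/-- The unique run of a deterministic automaton on an ω-word. -/
def run (x : ℕ → A) : ℕ → Q
  | 0 => M.init
  | n + 1 => M.trans (run x n) (x n)

/-- The parity language of `M`: the maximal color visited infinitely often is even. -/
def Lparity : Set (ℕ → A) := {x | MaxEvenInf fun n => M.color (M.run x n)}

/-- The number of colors of `M`. -/
def numColors [Fintype Q] : ℕ := (Finset.image M.color Finset.univ).card

end DPA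

namespace DPA

variable {Q I O : Type*} (M : DPA Q (I × O))

/-- The transition function of the color-tracking automaton `𝒞`. -/
def transC (qc : Q × ℕ) (x : I × O) : Q × ℕ :=
  (M.trans qc.1 x, max qc.2 (M.color (M.trans qc.1 x)))

/-- The initial state of the color-tracking automaton `𝒞`. -/
def initC : Q × ℕ := (M.init, M.color M.init)

/-- The valid states of `𝒞`, i.e. `Q × Ω(Q)`. -/
def QCvalid : Set (Q × ℕ) := {qc | qc.2 ∈ Set.range M.color}

/-- One step of the powerset automaton of the projection of `𝒞`. -/
def transP (S : Set (Q × ℕ)) (a : I) : Set (Q × ℕ) :=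
  ⋃ s ∈ S, ⋃ b : O, {M.transC s (a, b)}

/-- Iterated powerset transitions `δ_P^*`. -/
def transPStar (S : Set (Q × ℕ)) (w : List I) : Set (Q × ℕ) :=
  w.foldl M.transP S

/-- The domain of a partial function, represented via `Option`. -/
def rdom {Q : Type*} (r : (Q × ℕ) → Option (Set (Q × ℕ))) : Set (Q × ℕ) :=
  {qc | r qc ≠ none}

open scoped Classical in
/-- The partial function `r_w^D` with domain `D`. -/
noncomputable def rOf (D : Set (Q × ℕ)) (w : List I) :
    (Q × ℕ) → Option (Set (Q × ℕ)) :=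
  fun qc =>
    if qc ∈ D then some (M.transPStar ({(qc.1, M.color qc.1)} : Set (Q × ℕ)) w)
    else none

/-- The set `W_r` of witnesses of a partial function `r`. -/
def WitnessSet (r : (Q × ℕ) → Option (Set (Q × ℕ))) : Set (List I) :=
  {w | r = M.rOf (rdom r) w}

/-- The set `𝔉` of partial functions with nonempty domain and infinitely many
witnesses. -/
def Frak : Set ((Q × ℕ) → Option (Set (Q × ℕ))) :=
  {r | (rdom r).Nonempty ∧ (M.WitnessSet r).Infinite}

end DPA

end DelayGames

universe u

namespace DelayGames

open Filter

/-! ### Factors of ω-words -/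

section Words

variable {A B : Type*}

/-- The factor of length `l` of an ω-word that starts at position `p`. -/
def segment (x : ℕ → A) (p l : ℕ) : List A := List.ofFn fun i : Fin l => x (p + i)

@[simp]
theorem length_segment (x : ℕ → A) (p l : ℕ) : (segment x p l).length = l :=
  List.length_ofFn

theorem segment_congr {x y : ℕ → A} {p l : ℕ} (h : Set.EqOn x y (Set.Iio (p + l))) :
    segment x p l = segment y p l :=
  congrArg List.ofFn <| funext fun i => h (Nat.add_lt_add_left i.2 p)

theorem eqOn_Iio_of_segment_eq {x y : ℕ → A} {l : ℕ} (h : segment x 0 l = segment y 0 l) :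
    Set.EqOn x y (Set.Iio l) := fun i hi => by
  simpa using congrFun (List.ofFn_inj.1 h) ⟨i, hi⟩

theorem segment_append (x : ℕ → A) (p l m : ℕ) :
    segment x p l ++ segment x (p + l) m = segment x p (l + m) := by
  simp only [segment, List.ofFn_add, Fin.val_castLE, Fin.val_natAdd, Nat.add_assoc]

theorem segment_succ (x : ℕ → A) (p l : ℕ) :
    segment x p (l + 1) = segment x p l ++ [x (p + l)] := by
  rw [← segment_append]
  simp [segment]

theorem map_segment (g : A → B) (x : ℕ → A) (p l : ℕ) :
    (segment x p l).map g = segment (fun i => g (x i)) p l :=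
  List.map_ofFn ..

theorem exists_eq_ofFn_of_map_fst_eq {v : List (A × B)} {l : ℕ} {u : Fin l → A}
    (h : v.map Prod.fst = List.ofFn u) : ∃ b : Fin l → B, v = List.ofFn fun i => (u i, b i) := by
  obtain rfl : v.length = l := by simpa using congrArg List.length h
  refine ⟨fun i => (v.get i).2, List.ext_getElem (by simp) fun i hi _ => ?_⟩
  have hu : v[i].1 = u ⟨i, hi⟩ := by simpa [hi] using congrArg (·[i]?) h
  simp [← hu]

theorem pre_eq_segment (x : ℕ → A) (l : ℕ) : pre x l = segment x 0 l :=
  List.ext_getElem (by simp [pre]) fun i _ _ => by simp [pre, segment]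

/-- The ω-word `x` with the letters from position `p` on overwritten by the finite word `w`. -/
def splice (x : ℕ → A) (p : ℕ) (w : List A) : ℕ → A :=
  fun i => if i < p then x i else w.getD (i - p) (x i)

theorem eqOn_splice (x : ℕ → A) (p : ℕ) (w : List A) :
    Set.EqOn (splice x p w) x (Set.Iio p) := fun _ hi => if_pos hi

theorem segment_splice (x : ℕ → A) (p : ℕ) (w : List A) :
    segment (splice x p w) p w.length = w :=
  List.ext_getElem (by simp) fun i _ hi => by simp [segment, splice]

end Words

/-! ### The largest value occurring infinitely often -/

/-- `K` is the largest value that the sequence `c` takes infinitely often, and `c` exceeds `K`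
only finitely often. -/
def IsLargestRecurring (c : ℕ → ℕ) (K : ℕ) : Prop :=
  (∃ᶠ n in atTop, c n = K) ∧ ∀ᶠ n in atTop, c n ≤ K

theorem exists_isLargestRecurring {c : ℕ → ℕ} (hc : BddAbove (Set.range c)) :
    ∃ K, IsLargestRecurring c K := by
  classical
  obtain ⟨b, hb⟩ := hc
  have hex : ∃ K, ∀ᶠ n in atTop, c n ≤ K := ⟨b, .of_forall fun n => hb ⟨n, rfl⟩⟩
  refine ⟨Nat.find hex, fun hne => ?_, Nat.find_spec hex⟩
  have hlt : ∀ᶠ n in atTop, c n < Nat.find hex :=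
    (hne.and (Nat.find_spec hex)).mono fun n hn => lt_of_le_of_ne hn.2 hn.1
  obtain ⟨n, hn⟩ := hlt.exists
  exact Nat.find_min hex (Nat.sub_one_lt_of_lt hn) (hlt.mono fun m hm => Nat.le_sub_one_of_lt hm)

theorem IsLargestRecurring.maxEvenInf_iff {c : ℕ → ℕ} {K : ℕ} (h : IsLargestRecurring c K) :
    MaxEvenInf c ↔ Even K := by
  have hK : {n | c n = K}.Infinite := Nat.frequently_atTop_iff_infinite.1 h.1
  have hmax : ∀ k, {n | c n = k}.Infinite → k ≤ K := fun k hk => by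
    obtain ⟨n, hn, hle⟩ := ((Nat.frequently_atTop_iff_infinite.2 hk).and_eventually h.2).exists
    exact hn ▸ hle
  refine ⟨fun ⟨k, hk, hinf, hle⟩ => ?_, fun hE => ⟨K, hE, hK, hmax⟩⟩
  rwa [← (hmax k hinf).antisymm (hle K hK)]

/-- The maximum of the sequence `c` on the interval `[p, r]`, both ends included. -/
def maxOn (c : ℕ → ℕ) (p r : ℕ) : ℕ := (Finset.Icc p r).sup c

section maxOn

variable {c d : ℕ → ℕ} {p q r i : ℕ}

theorem le_maxOn (hp : p ≤ i) (hr : i ≤ r) : c i ≤ maxOn c p r :=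
  Finset.le_sup (Finset.mem_Icc.2 ⟨hp, hr⟩)

theorem exists_eq_maxOn (c : ℕ → ℕ) (h : p ≤ r) : ∃ i, p ≤ i ∧ i ≤ r ∧ c i = maxOn c p r := by
  obtain ⟨i, hi, heq⟩ := Finset.exists_mem_eq_sup _ (Finset.nonempty_Icc.2 h) c
  exact ⟨i, (Finset.mem_Icc.1 hi).1, (Finset.mem_Icc.1 hi).2, heq.symm⟩

theorem maxOn_congr (h : ∀ i ≤ r, c i = d i) : maxOn c p r = maxOn d p r :=
  Finset.sup_congr rfl fun i hi => h i (Finset.mem_Icc.1 hi).2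

theorem max_maxOn_maxOn (c : ℕ → ℕ) (hpq : p ≤ q) (hqr : q ≤ r) :
    max (maxOn c p q) (maxOn c q r) = maxOn c p r := by
  rw [maxOn, maxOn, ← Finset.sup_union]
  congr 1
  ext i
  simp only [Finset.mem_union, Finset.mem_Icc]
  omega

theorem maxOn_self (c : ℕ → ℕ) (p : ℕ) : maxOn c p p = c p := by simp [maxOn]

theorem maxOn_succ (c : ℕ → ℕ) (h : p ≤ r) :
    maxOn c p (r + 1) = max (maxOn c p r) (c (r + 1)) := by
  rw [maxOn, ← Finset.insert_Icc_right_eq_Icc_add_one (h.trans r.le_succ), Finset.sup_insert,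
    max_comm, maxOn]

theorem IsLargestRecurring.maxOn_strictMono {K : ℕ} {p : ℕ → ℕ} (h : IsLargestRecurring c K)
    (hp : StrictMono p) : IsLargestRecurring (fun n => maxOn c (p n) (p (n + 1))) K := by
  obtain ⟨N, hN⟩ := eventually_atTop.1 h.2
  have hle : ∀ n, N ≤ n → maxOn c (p n) (p (n + 1)) ≤ K := fun n hn =>
    Finset.sup_le fun i hi =>
      hN i ((hn.trans (hp.le_apply)).trans (Finset.mem_Icc.1 hi).1)
  refine ⟨frequently_atTop.2 fun m => ?_, eventually_atTop.2 ⟨N, hle⟩⟩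
  obtain ⟨i, hi, hci⟩ := frequently_atTop.1 h.1 (p (max m N))
  obtain ⟨n, hn, hin, hni⟩ : ∃ n, max m N ≤ n ∧ p n ≤ i ∧ i < p (n + 1) := by
    have hmem := (biUnion_Ici_Ico_map_succ (fun _ hj => hp.monotone hj)
      ((Set.Ici_infinite (max m N)).image hp.injective.injOn).not_bddAbove).ge hi
    simpa [and_left_comm] using hmem
  exact ⟨n, (le_max_left m N).trans hn,
    (hle n ((le_max_right m N).trans hn)).antisymm (hci ▸ le_maxOn hin hni.le)⟩

end maxOn

/-! ### Runs and the pairs reachable from a set of states -/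

namespace DPA

section Run

variable {Q A : Type*} {M : DPA Q A}

theorem run_congr {x y : ℕ → A} {p : ℕ} (h : Set.EqOn x y (Set.Iio p)) :
    M.run x p = M.run y p := by
  induction p with
  | zero => rfl
  | succ p ih =>
    rw [run, run, ih (h.mono (Set.Iio_subset_Iio p.le_succ)), h (Set.mem_Iio.2 p.lt_succ_self)]

variable (M) in
/-- The sequence of colors of the run on an ω-word. -/
def runColor (x : ℕ → A) (i : ℕ) : ℕ := M.color (M.run x i)

theorem maxOn_runColor_congr {x y : ℕ → A} {p r : ℕ} (h : Set.EqOn x y (Set.Iio r)) :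
    maxOn (M.runColor x) p r = maxOn (M.runColor y) p r :=
  maxOn_congr fun _ hi => congrArg M.color (run_congr (h.mono (Set.Iio_subset_Iio hi)))

theorem maxOn_runColor_mem_range (x : ℕ → A) {p r : ℕ} (h : p ≤ r) :
    maxOn (M.runColor x) p r ∈ Set.range M.color :=
  let ⟨i, _, _, hi⟩ := exists_eq_maxOn (M.runColor x) h
  ⟨M.run x i, hi⟩

theorem exists_isLargestRecurring_runColor [Finite Q] (M : DPA Q A) (x : ℕ → A) :
    ∃ K, IsLargestRecurring (M.runColor x) K :=
  exists_isLargestRecurring <|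
    ((Set.finite_range M.color).subset (Set.range_comp_subset_range _ _)).bddAbove

end Run

variable {Q I O : Type*} (M : DPA Q (I × O))

theorem foldl_transC_segment (x : ℕ → I × O) (p l : ℕ) :
    (segment x p l).foldl M.transC (M.run x p, M.color (M.run x p)) =
      (M.run x (p + l), maxOn (M.runColor x) p (p + l)) := by
  induction l with
  | zero => simp [segment, maxOn_self, runColor]
  | succ l ih =>
    rw [segment_succ, List.foldl_append, ih, ← Nat.add_assoc,
      maxOn_succ _ (Nat.le_add_right p l)]
    rfl

theorem mem_transP {S : Set (Q × ℕ)} {a : I} {t : Q × ℕ} :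
    t ∈ M.transP S a ↔ ∃ s ∈ S, ∃ b : O, M.transC s (a, b) = t := by
  simp [transP, eq_comm]

theorem mem_transPStar {S : Set (Q × ℕ)} {w : List I} {t : Q × ℕ} :
    t ∈ M.transPStar S w ↔
      ∃ s ∈ S, ∃ v : List (I × O), v.map Prod.fst = w ∧ v.foldl M.transC s = t := by
  induction w generalizing S with
  | nil => simp [transPStar]
  | cons a w ih =>
    change t ∈ M.transPStar (M.transP S a) w ↔ _
    simp only [ih, mem_transP, List.map_eq_cons_iff]
    constructor
    · rintro ⟨_, ⟨s, hs, b, rfl⟩, v, hv, ht⟩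
      exact ⟨s, hs, (a, b) :: v, ⟨(a, b), v, rfl, rfl, hv⟩, ht⟩
    · rintro ⟨s, hs, _, ⟨⟨_, b⟩, v, rfl, rfl, hv⟩, ht⟩
      exact ⟨_, ⟨s, hs, b, rfl⟩, v, hv, ht⟩

theorem transPStar_append (S : Set (Q × ℕ)) (u v : List I) :
    M.transPStar S (u ++ v) = M.transPStar (M.transPStar S u) v :=
  List.foldl_append

theorem transPStar_union (S T : Set (Q × ℕ)) (w : List I) :
    M.transPStar (S ∪ T) w = M.transPStar S w ∪ M.transPStar T w := by
  ext t
  simp only [mem_transPStar, Set.mem_union, or_and_right, exists_or]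

theorem transPStar_mono {S T : Set (Q × ℕ)} (h : S ⊆ T) (w : List I) :
    M.transPStar S w ⊆ M.transPStar T w := fun _ ht =>
  let ⟨s, hs, hv⟩ := (M.mem_transPStar).1 ht
  (M.mem_transPStar).2 ⟨s, h hs, hv⟩

/-- The pair `(q, c)` with its color raised to at least `d`, as if the color `d` had been seen
before. -/
def raise (d : ℕ) (s : Q × ℕ) : Q × ℕ := (s.1, max d s.2)

theorem foldl_transC_raise (d : ℕ) (v : List (I × O)) (s : Q × ℕ) :
    v.foldl M.transC (raise d s) = raise d (v.foldl M.transC s) :=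
  List.foldl_hom (raise d) fun _ _ => Prod.ext rfl (max_assoc ..)

theorem transPStar_image_raise (d : ℕ) (S : Set (Q × ℕ)) (w : List I) :
    M.transPStar (raise d '' S) w = raise d '' M.transPStar S w := by
  ext t
  simp only [mem_transPStar, Set.mem_image]
  constructor
  · rintro ⟨_, ⟨s, hs, rfl⟩, v, hv, rfl⟩
    exact ⟨_, ⟨s, hs, v, hv, rfl⟩, (M.foldl_transC_raise d v s).symm⟩
  · rintro ⟨_, ⟨s, hs, v, hv, rfl⟩, rfl⟩
    exact ⟨_, ⟨s, hs, rfl⟩, v, hv, M.foldl_transC_raise d v s⟩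

/-- The pairs whose second component is a color of `M` that is at least the color of the first
component. -/
def validPairs : Set (Q × ℕ) := {s | s.2 ∈ Set.range M.color ∧ M.color s.1 ≤ s.2}

theorem transPStar_subset_validPairs {S : Set (Q × ℕ)} (hS : S ⊆ M.validPairs) (w : List I) :
    M.transPStar S w ⊆ M.validPairs := by
  intro t ht
  obtain ⟨s, hs, v, -, rfl⟩ := (M.mem_transPStar).1 ht
  refine List.foldlRecOn v M.transC (motive := (· ∈ M.validPairs)) (hS hs)
    fun s hs x _ => ⟨?_, le_max_right _ _⟩
  rcases max_choice s.2 (M.color (M.trans s.1 x)) with h | h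
  · exact (congrArg (· ∈ Set.range M.color) h).mpr hs.1
  · exact ⟨M.trans s.1 x, h.symm⟩

/-- The states in `H`, each paired with its own color. -/
def start (H : Set Q) : Set (Q × ℕ) := (fun q => (q, M.color q)) '' H

theorem start_subset_validPairs (H : Set Q) : M.start H ⊆ M.validPairs := by
  rintro _ ⟨q, -, rfl⟩
  exact ⟨⟨q, rfl⟩, le_rfl⟩

theorem start_mono {H H' : Set Q} (h : H ⊆ H') : M.start H ⊆ M.start H' := Set.image_mono h

theorem start_singleton (q : Q) : M.start {q} = {(q, M.color q)} := Set.image_singleton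

/-- The pairs `(q, c)` such that some run reads `w` in the first component, leads from `H` to
`q`, and visits `c` as its largest color. -/
def reach (H : Set Q) (w : List I) : Set (Q × ℕ) := M.transPStar (M.start H) w

theorem reach_append (H : Set Q) (u v : List I) :
    M.reach H (u ++ v) = M.transPStar (M.reach H u) v := M.transPStar_append _ u v

theorem reach_union (H H' : Set Q) (w : List I) :
    M.reach (H ∪ H') w = M.reach H w ∪ M.reach H' w := by
  rw [reach, start, Set.image_union, transPStar_union]
  rfl

theorem reach_subset_validPairs (H : Set Q) (w : List I) : M.reach H w ⊆ M.validPairs :=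
  M.transPStar_subset_validPairs (M.start_subset_validPairs H) w

theorem transPStar_singleton {s : Q × ℕ} (hs : s ∈ M.validPairs) (w : List I) :
    M.transPStar {s} w = raise s.2 '' M.reach {s.1} w := by
  rw [reach, start_singleton, ← transPStar_image_raise, Set.image_singleton, raise,
    max_eq_left hs.2]

theorem mem_reach_run (x : ℕ → I × O) (p l : ℕ) :
    (M.run x (p + l), maxOn (M.runColor x) p (p + l)) ∈
      M.reach {M.run x p} (segment (fun i => (x i).1) p l) :=
  (M.mem_transPStar).2 ⟨_, ⟨_, rfl, rfl⟩, segment x p l, map_segment Prod.fst x p l,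
    M.foldl_transC_segment x p l⟩

theorem exists_answers_of_mem_reach {q : Q} {l : ℕ} {u : Fin l → I} {t : Q × ℕ}
    (ht : t ∈ M.reach {q} (List.ofFn u)) :
    ∃ b : Fin l → O, (List.ofFn fun i => (u i, b i)).foldl M.transC (q, M.color q) = t := by
  obtain ⟨_, ⟨_, rfl, rfl⟩, v, hv, ht⟩ := M.mem_transPStar.1 ht
  obtain ⟨b, rfl⟩ := exists_eq_ofFn_of_map_fst_eq hv
  exact ⟨b, ht⟩

end DPA

/-! ### Preference and domination -/

/-- The preference of Player O among colors, as the order of its values: even colors are better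
than odd ones, and larger is better among even, smaller among odd colors. -/
def pref (c : ℕ) : ℤ := if Even c then c else -c

theorem pref_le_pref_iff {c d : ℕ} :
    pref c ≤ pref d ↔ (Odd d → Odd c ∧ d ≤ c) ∧ (Even c → c ≤ d) := by
  unfold pref
  split_ifs <;> grind

theorem pref_max_le_pref_max {c d : ℕ} (h : pref c ≤ pref d) (e : ℕ) :
    pref (max e c) ≤ pref (max e d) := by
  rw [pref_le_pref_iff] at h ⊢
  grind

/-- `T` offers Player O at least what `S` does: each state occurs in `T` with colors at least as
good as those with which it occurs in `S`. -/
def DominatedBy {Q : Type*} (S T : Set (Q × ℕ)) : Prop :=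
  ∀ q c, (q, c) ∈ S → ∃ d, (q, d) ∈ T ∧ pref c ≤ pref d

namespace DominatedBy

variable {Q I O : Type*} {S T U : Set (Q × ℕ)}

theorem of_subset (h : S ⊆ T) : DominatedBy S T := fun _ c hc => ⟨c, h hc, le_rfl⟩

protected theorem trans (h : DominatedBy S T) (h' : DominatedBy T U) : DominatedBy S U :=
  fun q c hc =>
    let ⟨d, hd, hcd⟩ := h q c hc
    let ⟨e, he, hde⟩ := h' q d hd
    ⟨e, he, hcd.trans hde⟩

theorem transPStar (M : DPA Q (I × O)) (h : DominatedBy S T) (w : List I) :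
    DominatedBy (M.transPStar S w) (M.transPStar T w) := by
  intro q c hc
  induction w using List.reverseRecOn generalizing q c with
  | nil => exact h q c hc
  | append_singleton w a ih =>
    rw [M.transPStar_append] at hc ⊢
    obtain ⟨⟨q', c'⟩, hs, b, hb⟩ := M.mem_transP.1 hc
    obtain ⟨d', hd', hcd⟩ := ih q' c' hs
    obtain ⟨rfl, rfl⟩ := Prod.mk.inj hb
    refine ⟨_, M.mem_transP.2 ⟨_, hd', b, rfl⟩, ?_⟩
    simpa only [max_comm _ (M.color _)] using pref_max_le_pref_max hcd _

end DominatedBy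

/-! ### Progress measures -/

/-- Progress measures as for parity games: sequences of ordinals indexed by colors, compared
lexicographically with larger colors being more significant. -/
abbrev ParityMeasure (B : ℕ) := Colex (Fin B → Ordinal.{u})

namespace ParityMeasure

variable {B : ℕ} {θ θ' θ'' : ParityMeasure.{u} B} {c d : ℕ}

/-- The measure with all components below `c` erased. -/
def tail (c : ℕ) (θ : ParityMeasure.{u} B) : ParityMeasure.{u} B :=
  toColex fun i => if c ≤ i then ofColex θ i else 0

theorem tail_le_tail_of_le (h : ∀ i : Fin B, c ≤ i → ofColex θ' i ≤ ofColex θ i) :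
    tail c θ' ≤ tail c θ :=
  Pi.toColex_monotone fun i => by
    by_cases hi : c ≤ i
    · simpa [hi] using h i hi
    · simp [hi]

theorem tail_lt_tail_iff :
    tail c θ' < tail c θ ↔
      ∃ i : Fin B, c ≤ i ∧ ofColex θ' i < ofColex θ i ∧
        ∀ j, i < j → ofColex θ' j = ofColex θ j := by
  constructor
  · rintro ⟨i, heq, hlt⟩
    by_cases hi : c ≤ i
    · refine ⟨i, hi, by simpa [tail, hi] using hlt, fun j hj => ?_⟩
      simpa [tail, hi.trans (Fin.lt_def.1 hj).le] using heq j hj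
    · simp [tail, hi] at hlt
  · rintro ⟨i, hi, hlt, heq⟩
    refine ⟨i, fun j hj => ?_, by simpa [tail, hi] using hlt⟩
    simpa [tail, hi.trans (Fin.lt_def.1 hj).le] using heq j hj

theorem tail_lt_tail_of_index_le (hdc : d ≤ c) (h : tail c θ' < tail c θ) :
    tail d θ' < tail d θ :=
  let ⟨i, hi, hlt⟩ := tail_lt_tail_iff.1 h
  tail_lt_tail_iff.2 ⟨i, hdc.trans hi, hlt⟩

theorem tail_le_tail_of_index_le (hcd : c ≤ d) (h : tail c θ' ≤ tail c θ) :
    tail d θ' ≤ tail d θ :=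
  le_of_not_gt fun hlt => (tail_lt_tail_of_index_le hcd hlt).not_ge h

/-- The progress required for a run segment of maximal color `c`: the measure may increase only
in components below `c`, and if `c` is odd, it decreases in the others. -/
def Progress (c : ℕ) (θ θ' : ParityMeasure.{u} B) : Prop :=
  tail c θ' ≤ tail c θ ∧ (Odd c → tail c θ' < tail c θ)

namespace Progress

theorem of_le (hc : c < B) (hle : ∀ i : Fin B, c ≤ i → ofColex θ' i ≤ ofColex θ i)
    (hlt : Odd c → ofColex θ' ⟨c, hc⟩ < ofColex θ ⟨c, hc⟩) : Progress c θ θ' := by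
  refine ⟨tail_le_tail_of_le hle, fun hodd => ?_⟩
  refine Pi.toColex_strictMono (Pi.lt_def.2 ⟨fun i => ?_, ⟨c, hc⟩, by simpa using hlt hodd⟩)
  by_cases hi : c ≤ i
  · simpa [hi] using hle i hi
  · simp [hi]

theorem of_pref (h : Progress c θ θ') (hcd : pref c ≤ pref d) : Progress d θ θ' := by
  obtain ⟨hodd, heven⟩ := pref_le_pref_iff.1 hcd
  refine ⟨?_, fun hd => tail_lt_tail_of_index_le (hodd hd).2 (h.2 (hodd hd).1)⟩
  rcases le_total c d with hle | hle
  · exact tail_le_tail_of_index_le hle h.1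
  · rcases Nat.even_or_odd c with hc | hc
    · exact tail_le_tail_of_index_le (heven hc) h.1
    · exact (tail_lt_tail_of_index_le hle (h.2 hc)).le

protected theorem trans (h : Progress c θ θ') (h' : Progress d θ' θ'') :
    Progress (max c d) θ θ'' := by
  have h₁ := tail_le_tail_of_index_le (le_max_left c d) h.1
  have h₂ := tail_le_tail_of_index_le (le_max_right c d) h'.1
  refine ⟨h₂.trans h₁, fun hodd => ?_⟩
  rcases max_choice c d with hmax | hmax <;> rw [hmax] at h₁ h₂ hodd ⊢
  · exact h₂.trans_lt (h.2 hodd)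
  · exact (h'.2 hodd).trans_le h₁

/-- Otherwise the components from `K` on would decrease infinitely often without ever increasing
again. -/
theorem even_of_isLargestRecurring {c : ℕ → ℕ} {θ : ℕ → ParityMeasure.{u} B} {K : ℕ}
    (h : ∀ n, Progress (c n) (θ n) (θ (n + 1))) (hK : IsLargestRecurring c K) : Even K := by
  by_contra hodd
  obtain ⟨N, hN⟩ := eventually_atTop.1 hK.2
  have hanti : Antitone fun n => tail K (θ (N + n)) := antitone_nat_of_succ_le fun n =>
    tail_le_tail_of_index_le (hN (N + n) (Nat.le_add_right N n)) (h (N + n)).1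
  obtain ⟨m, hm⟩ := WellFoundedLT.antitone_chain_condition hanti
  obtain ⟨n, hn, rfl⟩ := frequently_atTop.1 hK.1 (N + m)
  obtain ⟨i, rfl⟩ := Nat.exists_eq_add_of_le hn
  have hlt := (h (N + m + i)).2 (Nat.not_even_iff_odd.1 hodd)
  have h₁ := hm (m + i) (Nat.le_add_right m i)
  have h₂ := hm (m + i + 1) (by omega)
  simp only [← Nat.add_assoc] at h₁ h₂
  exact hlt.ne (h₂.symm.trans h₁)

end Progress

end ParityMeasure

/-! ### Winning sets of pairs -/

open ParityMeasure

section Win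

variable {Q I O : Type*} (M : DPA Q (I × O)) {B : ℕ}

/-- Closedness of a relation `R` between sets of pairs and measures: if `R S θ`, then after every
sufficiently long further block `w` of input letters Player O can commit to some `(q, c) ∈ S` such
that `R` holds of the pairs reachable from `q` via `w` and a measure that has progressed with
respect to `c`. The required length may depend on `S` and `θ`. -/
def Closed (R : Set (Q × ℕ) → ParityMeasure.{u} B → Prop) : Prop :=
  ∀ S θ, R S θ → ∃ N, ∀ w : List I, N ≤ w.length →
    ∃ q c, (q, c) ∈ S ∧ ∃ θ', Progress c θ θ' ∧ R (M.reach {q} w) θ'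

/-- The largest closed relation: Player O can keep committing to pairs from `S` on, each time with
progress of the measure. -/
def Win (S : Set (Q × ℕ)) (θ : ParityMeasure.{u} B) : Prop :=
  ∃ R, Closed M R ∧ R S θ

/-- `S` is winning with a measure that has progressed from `θ` with respect to `c`. -/
def WinAfter (c : ℕ) (θ : ParityMeasure.{u} B) (S : Set (Q × ℕ)) : Prop :=
  ∃ θ', Progress c θ θ' ∧ Win M S θ'

variable {M} {S T : Set (Q × ℕ)} {θ θ' : ParityMeasure.{u} B} {c d : ℕ}

theorem win_iff :
    Win M S θ ↔ ∃ N, ∀ w : List I, N ≤ w.length →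
      ∃ q c, (q, c) ∈ S ∧ WinAfter M c θ (M.reach {q} w) := by
  constructor
  · rintro ⟨R, hR, hS⟩
    obtain ⟨N, hN⟩ := hR S θ hS
    refine ⟨N, fun w hw => ?_⟩
    obtain ⟨q, c, hq, θ', hp, h⟩ := hN w hw
    exact ⟨q, c, hq, θ', hp, R, hR, h⟩
  · rintro ⟨N, hN⟩
    refine ⟨fun S' θ' => Win M S' θ' ∨ S' = S ∧ θ' = θ, ?_, Or.inr ⟨rfl, rfl⟩⟩
    rintro S' θ' (⟨R, hR, hS⟩ | ⟨rfl, rfl⟩)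
    · obtain ⟨N', hN'⟩ := hR S' θ' hS
      refine ⟨N', fun w hw => ?_⟩
      obtain ⟨q, c, hq, θ'', hp, h⟩ := hN' w hw
      exact ⟨q, c, hq, θ'', hp, Or.inl ⟨R, hR, h⟩⟩
    · refine ⟨N, fun w hw => ?_⟩
      obtain ⟨q, c, hq, θ'', hp, h⟩ := hN w hw
      exact ⟨q, c, hq, θ'', hp, Or.inl h⟩

theorem WinAfter.of_pref (h : WinAfter M c θ S) (hcd : pref c ≤ pref d) : WinAfter M d θ S :=
  let ⟨θ', hp, hS⟩ := h
  ⟨θ', hp.of_pref hcd, hS⟩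

theorem Win.of_dominatedBy (h : Win M S θ) (hST : DominatedBy S T) : Win M T θ := by
  obtain ⟨N, hN⟩ := win_iff.1 h
  refine win_iff.2 ⟨N, fun w hw => ?_⟩
  obtain ⟨q, c, hq, hwin⟩ := hN w hw
  obtain ⟨d, hd, hcd⟩ := hST q c hq
  exact ⟨q, d, hd, hwin.of_pref hcd⟩

theorem Win.image_raise (h : Win M S θ') (hp : Progress c θ θ') :
    Win M (DPA.raise c '' S) θ := by
  obtain ⟨N, hN⟩ := win_iff.1 h
  refine win_iff.2 ⟨N, fun w hw => ?_⟩
  obtain ⟨q, d, hq, θ'', hp', hwin⟩ := hN w hw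
  exact ⟨q, max c d, ⟨_, hq, rfl⟩, θ'', hp.trans hp', hwin⟩

theorem WinAfter.of_dominatedBy (h : WinAfter M c θ S) (hST : DominatedBy S T) :
    WinAfter M c θ T :=
  let ⟨θ', hp, hS⟩ := h
  ⟨θ', hp, hS.of_dominatedBy hST⟩

/-- A winning set of pairs can be reduced to one of its pairs once a long enough continuation is
known: raising that pair's color makes up for the progress spent on committing to it. -/
theorem WinAfter.exists_transPStar_singleton (hS : S ⊆ M.validPairs) (h : WinAfter M c θ S) :
    ∃ N, ∀ y : List I, N ≤ y.length → ∃ s ∈ S, WinAfter M c θ (M.transPStar {s} y) := by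
  obtain ⟨θ', hp, hwin⟩ := h
  obtain ⟨N, hN⟩ := win_iff.1 hwin
  refine ⟨N, fun y hy => ?_⟩
  obtain ⟨q, d, hq, θ'', hp', hwin'⟩ := hN y hy
  refine ⟨(q, d), hq, θ', hp, ?_⟩
  rw [M.transPStar_singleton (hS hq)]
  exact hwin'.image_raise hp'

theorem WinAfter.nonempty_of_reach [Nonempty I] {H : Set Q} {u : List I}
    (h : WinAfter M c θ (M.reach H u)) : H.Nonempty := by
  obtain ⟨a⟩ := ‹Nonempty I›
  obtain ⟨θ', -, hwin⟩ := h
  obtain ⟨N, hN⟩ := win_iff.1 hwin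
  obtain ⟨q, d, hq, -⟩ := hN (List.replicate N a) List.length_replicate.ge
  obtain ⟨_, ⟨p, hp, -⟩, -⟩ := M.mem_transPStar.1 hq
  exact ⟨p, hp⟩

end Win

/-! ### Pumping -/

/-- Here `r u v` says that `u` may replace `v`; words with the same code are interchangeable. -/
theorem exists_long_related {A E : Type*} [Finite E] {r : List A → List A → Prop}
    (htrans : ∀ {u v w}, r u v → r v w → r u w) (happend : ∀ {u v} w, r u v → r (u ++ w) (v ++ w))
    {code : List A → E} (hcode : ∀ u v, code u = code v → r u v) {x : List A}
    (hx : Nat.card E ≤ x.length) (N : ℕ) : ∃ y, N ≤ y.length ∧ r y x := by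
  suffices h : ∃ y, x.length + N ≤ y.length ∧ r y x from
    let ⟨y, hy, hr⟩ := h
    ⟨y, le_of_add_le_right hy, hr⟩
  induction N with
  | zero => exact ⟨x, le_rfl, hcode x x rfl⟩
  | succ N ih =>
    obtain ⟨y, hy, hr⟩ := ih
    have hcollision : ∃ i j, i < j ∧ j ≤ y.length ∧ code (y.take i) = code (y.take j) := by
      have := Fintype.ofFinite E
      obtain ⟨i, j, hne, heq⟩ := Fintype.exists_ne_map_eq_of_card_lt
        (fun i : Fin (y.length + 1) => code (y.take i))
        (by rw [Fintype.card_fin, ← Nat.card_eq_fintype_card]; omega)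
      rcases hne.lt_or_gt with hij | hij
      · exact ⟨i, j, hij, Nat.lt_succ_iff.1 j.2, heq⟩
      · exact ⟨j, i, hij, Nat.lt_succ_iff.1 i.2, heq.symm⟩
    obtain ⟨i, j, hij, hj, heq⟩ := hcollision
    refine ⟨y.take j ++ y.drop i, ?_, htrans ?_ hr⟩
    · simp only [List.length_append, List.length_take, List.length_drop]
      omega
    · simpa only [List.take_append_drop] using happend (y.drop i) (hcode _ _ heq.symm)

open scoped Classical in
/-- Adding the number of larger indices makes an antitone function strictly antitone, so that it is
determined by its range. -/
theorem card_filter_antitone_le (ι : Type*) [Fintype ι] [LinearOrder ι] (k : ℕ) :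
    ((Fintype.piFinset fun _ : ι => Finset.range (k + 1)).filter Antitone).card ≤
      2 ^ (Fintype.card ι + k) := by
  let rank (i : ι) : ℕ := (Finset.univ.filter (i < ·)).card
  have hrank : StrictAnti rank := fun i j hij => Finset.card_lt_card <|
    (Finset.ssubset_iff_of_subset fun l hl => by
      simp only [Finset.mem_filter_univ] at hl ⊢
      exact hij.trans hl).2 ⟨j, by simpa using hij, by simp⟩
  have hrank_lt (i : ι) : rank i < Fintype.card ι :=
    Finset.card_lt_univ_of_notMem (x := i) (by simp)
  rw [← Finset.card_range (Fintype.card ι + k), ← Finset.card_powerset]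
  refine Finset.card_le_card_of_injOn (fun f => Finset.univ.image fun i => rank i + f i)
    (fun f hf => ?_) fun f hf g hg hfg => ?_
  · refine Finset.mem_coe.2 (Finset.mem_powerset.2 (Finset.image_subset_iff.2 fun i _ => ?_))
    have hfi : f i < k + 1 := Finset.mem_range.1 <|
      Fintype.mem_piFinset.1 (Finset.mem_filter.1 (Finset.mem_coe.1 hf)).1 i
    have := hrank_lt i
    exact Finset.mem_range.2 (by omega)
  · have hstrict {f : ι → ℕ} (hf : Antitone f) :
        StrictMono ((fun i => rank i + f i) ∘ OrderDual.ofDual) :=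
      (hrank.add_antitone hf).dual_left
    have hrange := congrArg (fun s : Finset ℕ => (s : Set ℕ)) hfg
    simp only [Finset.coe_image, Finset.coe_univ, Set.image_univ] at hrange
    have heq := (StrictMono.range_inj (hstrict (Finset.mem_filter.1 hf).2)
      (hstrict (Finset.mem_filter.1 hg).2)).1 (by
        rwa [OrderDual.ofDual.surjective.range_comp, OrderDual.ofDual.surjective.range_comp])
    exact funext fun i => Nat.add_left_cancel (congrFun heq (OrderDual.toDual i))

/-! ### Comparing sets of pairs by counting -/

section Quality

variable {Q I O : Type*} [Fintype Q] (M : DPA Q (I × O))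

/-- The preferences of the colors of `M`. -/
def prefs : Finset ℤ := (Finset.univ.image M.color).image pref

theorem card_prefs_le : (prefs M).card ≤ M.numColors := Finset.card_image_le

open scoped Classical in
/-- The number of preferences that the colors with which `q` occurs in `S` reach or exceed. -/
noncomputable def quality (S : Set (Q × ℕ)) (q : Q) : ℕ :=
  ((prefs M).filter fun p => ∃ c, (q, c) ∈ S ∧ p ≤ pref c).card

variable {M} {S T : Set (Q × ℕ)}

theorem pref_mem_prefs {q : Q} {c : ℕ} (hS : S ⊆ M.validPairs) (hq : (q, c) ∈ S) :
    pref c ∈ prefs M := by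
  obtain ⟨⟨q', rfl⟩, -⟩ := hS hq
  exact Finset.mem_image_of_mem _ (Finset.mem_image_of_mem _ (Finset.mem_univ q'))

theorem quality_le_numColors (S : Set (Q × ℕ)) (q : Q) : quality M S q ≤ M.numColors := by
  classical
  exact (Finset.card_filter_le _ _).trans (card_prefs_le M)

theorem quality_mono (h : S ⊆ T) (q : Q) : quality M S q ≤ quality M T q := by
  classical
  exact Finset.card_le_card <|
    Finset.monotone_filter_right _ fun _ _ ⟨c, hc, hp⟩ => ⟨c, h hc, hp⟩

/-- For a fixed state, the sets counted by `quality` are initial segments of `prefs M`, hence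
comparable. -/
theorem dominatedBy_of_quality_le (hS : S ⊆ M.validPairs)
    (h : ∀ q, quality M S q ≤ quality M T q) : DominatedBy S T := by
  classical
  intro q c hc
  by_contra! hT
  refine (h q).not_gt (Finset.card_lt_card ?_)
  refine (Finset.ssubset_iff_of_subset fun p hp => ?_).2 ⟨pref c, ?_, fun hmem => ?_⟩
  · obtain ⟨hp, d, hd, hpd⟩ := Finset.mem_filter.1 hp
    exact Finset.mem_filter.2 ⟨hp, c, hc, hpd.trans (hT d hd).le⟩
  · exact Finset.mem_filter.2 ⟨pref_mem_prefs hS hc, c, hc, le_rfl⟩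
  · obtain ⟨-, d, hd, hcd⟩ := Finset.mem_filter.1 hmem
    exact hcd.not_gt (hT d hd)

theorem exists_long_dominatedBy {ι : Type*} (A : ι → Set (Q × ℕ)) (hA : ∀ i, A i ⊆ M.validPairs)
    {V : Finset (ι → ℕ)} (hV : ∀ w q, (fun i => quality M (M.transPStar (A i) w) q) ∈ V)
    {x : List I} (hx : V.card ^ Fintype.card Q ≤ x.length) (N : ℕ) :
    ∃ y : List I, N ≤ y.length ∧ ∀ i, DominatedBy (M.transPStar (A i) y) (M.transPStar (A i) x) :=
  exists_long_related (code := fun w q => (⟨_, hV w q⟩ : V))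
    (fun h h' i => (h i).trans (h' i))
    (fun w h i => by simpa only [M.transPStar_append] using (h i).transPStar M w)
    (fun u v huv i => dominatedBy_of_quality_le (M.transPStar_subset_validPairs (hA i) u)
      fun q => (congrFun (congrArg Subtype.val (congrFun huv q)) i).le)
    (by rwa [Nat.card_fun, Nat.card_eq_fintype_card, Fintype.card_coe, Nat.card_eq_fintype_card])
    N

/-- The qualities of an antitone family of sets form an antitone sequence, which is why this bound
is exponential in the number of colors rather than superexponential. -/
theorem exists_long_dominatedBy_of_antitone {A : prefs M → Set (Q × ℕ)} (hmono : Antitone A)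
    (hA : ∀ p, A p ⊆ M.validPairs) {x : List I}
    (hx : 2 ^ (2 * Fintype.card Q * M.numColors) ≤ x.length) (N : ℕ) :
    ∃ y : List I, N ≤ y.length ∧
      ∀ p, DominatedBy (M.transPStar (A p) y) (M.transPStar (A p) x) := by
  classical
  refine exists_long_dominatedBy A hA
    (V := (Fintype.piFinset fun _ => Finset.range (M.numColors + 1)).filter Antitone)
    (fun w q => Finset.mem_filter.2
      ⟨Fintype.mem_piFinset.2 fun p => Finset.mem_range_succ_iff.2 (quality_le_numColors _ q),
        fun p p' hp => quality_mono (M.transPStar_mono (hmono hp) w) q⟩) (le_trans ?_ hx) N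
  calc _ ≤ (2 ^ (Fintype.card (prefs M) + M.numColors)) ^ Fintype.card Q :=
        Nat.pow_le_pow_left (card_filter_antitone_le _ _) _
    _ ≤ (2 ^ (2 * M.numColors)) ^ Fintype.card Q := by
        have := card_prefs_le M
        gcongr
        · exact one_le_two
        · rw [Fintype.card_coe]
          omega
    _ = 2 ^ (2 * Fintype.card Q * M.numColors) := by rw [← pow_mul]; congr 1; ring

end Quality

/-! ### Selecting a single pair -/

section Select

variable {Q I O : Type*} [Fintype Q] {M : DPA Q (I × O)} {S T : Set (Q × ℕ)} {B : ℕ}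
  {θ : ParityMeasure.{u} B} {c : ℕ}

variable (M) in
/-- The number of letters that Player O has to know in order to choose between two sets. -/
def choiceLen : ℕ := (M.numColors + 1) ^ (2 * Fintype.card Q)

theorem WinAfter.of_union (hS : S ⊆ M.validPairs) (hT : T ⊆ M.validPairs) {v : List I}
    (hv : choiceLen M ≤ v.length) (h : WinAfter M c θ (S ∪ T)) :
    WinAfter M c θ (M.transPStar S v) ∨ WinAfter M c θ (M.transPStar T v) := by
  obtain ⟨N, hN⟩ := h.exists_transPStar_singleton (Set.union_subset hS hT)
  have hA : ∀ b, cond b S T ⊆ M.validPairs := Bool.rec hT hS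
  obtain ⟨y, hy, hdom⟩ := exists_long_dominatedBy (fun b => cond b S T) hA
    (V := Fintype.piFinset fun _ => Finset.range (M.numColors + 1))
    (fun w q => Fintype.mem_piFinset.2 fun b =>
      Finset.mem_range_succ_iff.2 (quality_le_numColors _ q))
    (by simpa [← pow_mul, choiceLen] using hv) N
  obtain ⟨s, hs, hwin⟩ := hN y hy
  have hwin' : ∀ b, s ∈ cond b S T → WinAfter M c θ (M.transPStar (cond b S T) v) := fun b hb =>
    (hwin.of_dominatedBy ((DominatedBy.of_subset (Set.singleton_subset_iff.2 hb)).transPStar M y)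
      ).of_dominatedBy (hdom b)
  exact hs.imp (hwin' true) (hwin' false)

/-- Each portion of `choiceLen M` letters of `v` splits off one state. -/
theorem WinAfter.exists_reach_singleton [Nonempty I] {m : ℕ} {H : Set Q} (hH : H.ncard ≤ m + 1)
    {u v : List I} (hv : v.length = m * choiceLen M) (h : WinAfter M c θ (M.reach H u)) :
    ∃ q ∈ H, WinAfter M c θ (M.reach {q} (u ++ v)) := by
  induction m generalizing H u v with
  | zero =>
    obtain ⟨q, rfl⟩ := Set.ncard_eq_one.1
      (hH.antisymm ((Set.ncard_pos H.toFinite).2 h.nonempty_of_reach))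
    obtain rfl : v = [] := by simpa using hv
    exact ⟨q, rfl, by rwa [List.append_nil]⟩
  | succ m ih =>
    obtain ⟨q, hq⟩ := h.nonempty_of_reach
    obtain ⟨v₁, v₂, rfl, hv₁, hv₂⟩ : ∃ v₁ v₂ : List I, v = v₁ ++ v₂ ∧
        v₁.length = choiceLen M ∧ v₂.length = m * choiceLen M :=
      ⟨_, _, (List.take_append_drop (choiceLen M) v).symm, by simp [hv, Nat.succ_mul],
        by simp [hv, Nat.succ_mul]⟩
    have hpart : ∀ H' ⊆ H, H'.ncard ≤ m + 1 → WinAfter M c θ (M.transPStar (M.reach H' u) v₁) →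
        ∃ q ∈ H, WinAfter M c θ (M.reach {q} (u ++ (v₁ ++ v₂))) := fun H' hH' hcard hwin => by
      obtain ⟨q, hq, hwin⟩ := ih hcard hv₂ (by rwa [M.reach_append])
      exact ⟨q, hH' hq, by rwa [← List.append_assoc]⟩
    have hq' : {q} ⊆ H := Set.singleton_subset_iff.2 hq
    rw [← Set.union_sdiff_cancel hq', M.reach_union] at h
    rcases h.of_union (M.reach_subset_validPairs _ u) (M.reach_subset_validPairs _ u) hv₁.ge with
      hwin | hwin
    · exact hpart {q} hq' (by simp) hwin
    · refine hpart (H \ {q}) Set.sdiff_subset ?_ hwin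
      rw [Set.ncard_sdiff_singleton_of_mem hq]
      omega

variable (M) in
/-- The length of the blocks in which Player O can consume the input: the first part allows her
to drop the bound on the length of the block, the second one to choose a state. -/
def blockLen : ℕ :=
  2 ^ (2 * Fintype.card Q * M.numColors) + Fintype.card Q * choiceLen M

variable (M) in
theorem blockLen_pos : 0 < blockLen M := Nat.add_pos_left (by positivity) _

theorem Win.exists_of_length_eq_blockLen [Nonempty I] (hT : T ⊆ M.validPairs) (h : Win M T θ)
    {w : List I} (hw : w.length = blockLen M) :
    ∃ q c, (q, c) ∈ T ∧ WinAfter M c θ (M.reach {q} w) := by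
  let H (p : prefs M) : Set Q := {q | ∃ c, (q, c) ∈ T ∧ p ≤ pref c}
  have hH : Antitone H := fun p p' hp q ⟨c, hc, hle⟩ => ⟨c, hc, le_trans hp hle⟩
  obtain ⟨u, v, rfl, hu, hv⟩ : ∃ u v : List I, w = u ++ v ∧
      u.length = 2 ^ (2 * Fintype.card Q * M.numColors) ∧
      v.length = Fintype.card Q * choiceLen M :=
    ⟨_, _, (List.take_append_drop (2 ^ (2 * Fintype.card Q * M.numColors)) w).symm,
      by simp [hw, blockLen], by simp [hw, blockLen]⟩
  obtain ⟨N, hN⟩ := win_iff.1 h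
  obtain ⟨y, hy, hdom⟩ := exists_long_dominatedBy_of_antitone (A := fun p => M.start (H p))
    (fun _ _ hp => M.start_mono (hH hp)) (fun p => M.start_subset_validPairs (H p)) hu.ge N
  obtain ⟨q, c, hc, hwin⟩ := hN y hy
  let p : prefs M := ⟨pref c, pref_mem_prefs hT hc⟩
  have hq : {q} ⊆ H p := Set.singleton_subset_iff.2 ⟨c, hc, le_rfl⟩
  have hwin' : WinAfter M c θ (M.reach (H p) u) := (hwin.of_dominatedBy
    (.of_subset (M.transPStar_mono (M.start_mono hq) y))).of_dominatedBy (hdom p)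
  obtain ⟨q', ⟨c', hc', hcc'⟩, hwin''⟩ := hwin'.exists_reach_singleton
    (m := Fintype.card Q) ((Set.ncard_le_card (H p)).trans (Nat.card_eq_fintype_card.trans_le
      (Nat.le_succ _))) hv
  exact ⟨q', c', hc', hwin''.of_pref hcc'⟩

end Select

/-! ### Strategies as causal maps -/

section Strategies

variable {I O : Type*} {f : ℕ → ℕ} {L : Set (ℕ → I × O)} {σ : (ℕ → I) → ℕ → O}

/-- The outcome when Player I produces `α` and Player O answers by `σ α`. -/
def play (σ : (ℕ → I) → ℕ → O) (α : ℕ → I) : ℕ → I × O := fun n => (α n, σ α n)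

/-- The number of letters that Player I has produced before round `p`. -/
def total (f : ℕ → ℕ) (p : ℕ) : ℕ := ∑ i ∈ Finset.range p, f i

theorem total_succ (f : ℕ → ℕ) (p : ℕ) : total f (p + 1) = total f p + f p :=
  Finset.sum_range_succ f p

theorem IsDelay.total_strictMono (hf : IsDelay f) : StrictMono (total f) :=
  strictMono_nat_of_lt_succ fun p => by
    rw [total_succ]
    exact Nat.lt_add_of_pos_right (hf p)

/-- The map `σ` is a strategy in `Γ_f`, up to its encoding: its answer in round `n` depends only on
the letters produced up to and including that round. -/
def IsCausal (f : ℕ → ℕ) (σ : (ℕ → I) → ℕ → O) : Prop :=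
  ∀ ⦃α α' n⦄, Set.EqOn α α' (Set.Iio (total f (n + 1))) → σ α n = σ α' n

theorem flatten_map_segment (f : ℕ → ℕ) (α : ℕ → I) (n : ℕ) :
    ((List.range n).map fun i => segment α (total f i) (f i)).flatten =
      segment α 0 (total f n) := by
  induction n with
  | zero => simp [total, segment]
  | succ n ih => simp [List.range_succ, ih, total_succ, ← segment_append α 0 (total f n) (f n)]

theorem ValidBlocks.length_flatten {u : ℕ → List I} (hu : ValidBlocks f u) (n : ℕ) :
    ((List.range n).map u).flatten.length = total f n := by
  induction n with
  | zero => simp [total]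
  | succ n ih =>
    rw [List.range_succ, List.map_append, List.flatten_append, List.length_append, ih, total_succ]
    simp [hu n]

theorem WinsO.exists_isCausal (h : WinsO f L) :
    ∃ σ : (ℕ → I) → ℕ → O, IsCausal f σ ∧ ∀ α, play σ α ∈ L := by
  obtain ⟨τ, hτ⟩ := h
  refine ⟨fun α n => τ (segment α 0 (total f (n + 1))), fun α α' n h => ?_, fun α => ?_⟩
  · exact congrArg τ (segment_congr (by rwa [Nat.zero_add]))
  · refine hτ (fun i => segment α (total f i) (f i)) _ α (fun i => length_segment ..)
      (fun i => ?_) (fun i => ?_)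
    · rw [flatten_map_segment]
    · rw [flatten_map_segment, length_segment]
      exact (pre_eq_segment α _).symm

theorem IsCausal.winsO [Nonempty I] (hf : IsDelay f) (hσ : IsCausal f σ)
    (hwin : ∀ α, play σ α ∈ L) : WinsO f L := by
  obtain ⟨a⟩ := ‹Nonempty I›
  let round : ℕ → ℕ := Function.invFun fun n => total f (n + 1)
  have hround (n : ℕ) : round (total f (n + 1)) = n :=
    Function.leftInverse_invFun
      (hf.total_strictMono.injective.comp (add_left_injective 1)) n
  refine ⟨fun w => σ (splice (fun _ => a) 0 w) (round w.length), fun u v α hu hv hα => ?_⟩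
  suffices h : v = σ α by
    subst h
    exact hwin α
  funext n
  have hpre : ((List.range (n + 1)).map u).flatten = segment α 0 (total f (n + 1)) := by
    rw [hα (n + 1), hu.length_flatten]
    exact pre_eq_segment α _
  rw [hv n, hpre]
  beta_reduce
  rw [length_segment, hround]
  exact hσ (eqOn_Iio_of_segment_eq (by
    simpa only [length_segment] using segment_splice (fun _ => a) 0 (segment α 0 _)))

theorem IsCausal.eqOn_play (hf : IsDelay f) (hσ : IsCausal f σ) {α α' : ℕ → I} {p : ℕ}
    (h : Set.EqOn α α' (Set.Iio (total f p))) :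
    Set.EqOn (play σ α) (play σ α') (Set.Iio p) := by
  intro i hi
  have hle : total f (i + 1) ≤ total f p := hf.total_strictMono.monotone hi
  have hlt : i < total f p := (Set.mem_Iio.1 hi).trans_le hf.total_strictMono.le_apply
  exact Prod.ext (h hlt) (hσ (h.mono (Set.Iio_subset_Iio hle)))

/-- The constant delay function with initial lookahead `d`. -/
def constDelay (d : ℕ) : ℕ → ℕ := fun i => if i = 0 then d else 1

theorem isDelay_constDelay {d : ℕ} (hd : 1 ≤ d) : IsDelay (constDelay d) := fun i => by
  unfold constDelay
  split_ifs
  exacts [hd, le_rfl]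

theorem isConstant_constDelay (d : ℕ) : IsConstant (constDelay d) := fun _ hi => if_neg hi.ne'

theorem total_constDelay_succ (d n : ℕ) : total (constDelay d) (n + 1) = d + n := by
  induction n with
  | zero => simp [total, constDelay]
  | succ n ih => rw [total_succ, ih, constDelay, if_neg n.succ_ne_zero, Nat.add_assoc]

end Strategies

/-! ### From winning strategies to winning sets of pairs -/

section Nodes

variable {Q I O : Type*} {f : ℕ → ℕ}

/-- A node of the game tree: Player I has produced the first `len` letters of `word`, enough to
determine the run up to position `pos`. The other letters of `word` are irrelevant. -/
structure Node (I : Type*) (f : ℕ → ℕ) where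
  word : ℕ → I
  len : ℕ
  pos : ℕ
  total_pos_lt : total f pos < len

/-- The node `h'` lies below `h`, and `e` is the largest color of the run between their
positions. -/
structure Below (M : DPA Q (I × O)) (σ : (ℕ → I) → ℕ → O) (e : ℕ) (h' h : Node I f) : Prop where
  eqOn : Set.EqOn h'.word h.word (Set.Iio h.len)
  len_le : h.len ≤ h'.len
  pos_lt : h.pos < h'.pos
  maxOn_eq : maxOn (M.runColor (play σ h'.word)) h.pos h'.pos = e

variable {M : DPA Q (I × O)} {σ : (ℕ → I) → ℕ → O}

theorem Node.eqOn_play (hf : IsDelay f) (hσ : IsCausal f σ) (h : Node I f) {α : ℕ → I}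
    (hα : Set.EqOn α h.word (Set.Iio h.len)) :
    Set.EqOn (play σ α) (play σ h.word) (Set.Iio h.pos) :=
  hσ.eqOn_play hf (hα.mono (Set.Iio_subset_Iio h.total_pos_lt.le))

theorem Node.pos_lt_len (hf : IsDelay f) (h : Node I f) : h.pos < h.len :=
  hf.total_strictMono.le_apply.trans_lt h.total_pos_lt

theorem Below.trans (hf : IsDelay f) (hσ : IsCausal f σ) {d e : ℕ} {h'' h' h : Node I f}
    (hd : Below M σ d h'' h') (he : Below M σ e h' h) : Below M σ (max e d) h'' h where
  eqOn := (hd.eqOn.mono (Set.Iio_subset_Iio he.len_le)).trans he.eqOn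
  len_le := he.len_le.trans hd.len_le
  pos_lt := he.pos_lt.trans hd.pos_lt
  maxOn_eq := by
    rw [← max_maxOn_maxOn _ he.pos_lt.le hd.pos_lt.le, hd.maxOn_eq,
      DPA.maxOn_runColor_congr (h'.eqOn_play hf hσ hd.eqOn), he.maxOn_eq]

theorem exists_limit_word (hf : IsDelay f) {e : ℕ} {h : ℕ → Node I f}
    (hdesc : ∀ n, Below M σ e (h (n + 1)) (h n)) :
    ∃ α : ℕ → I, ∀ n, Set.EqOn α (h n).word (Set.Iio (h n).len) := by
  have hlen : Monotone fun n => (h n).len := monotone_nat_of_le_succ fun n => (hdesc n).len_le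
  have hpos : StrictMono fun n => (h n).pos := strictMono_nat_of_lt_succ fun n => (hdesc n).pos_lt
  have heq {m n : ℕ} (hmn : m ≤ n) : Set.EqOn (h n).word (h m).word (Set.Iio (h m).len) := by
    induction n, hmn using Nat.le_induction with
    | base => exact fun _ _ => rfl
    | succ n hmn ih =>
      exact ((hdesc n).eqOn.mono (Set.Iio_subset_Iio (hlen hmn))).trans ih
  refine ⟨fun i => (h i).word i, fun n i hi => ?_⟩
  have hi' : i < (h i).len := hpos.le_apply.trans_lt ((h i).pos_lt_len hf)
  rcases le_total i n with hin | hni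
  · exact (heq hin hi').symm
  · exact heq hni hi

/-- A descending chain would yield a play with the odd largest recurring color `e`. -/
theorem wellFounded_below [Finite Q] (hf : IsDelay f) (hσ : IsCausal f σ)
    (hwin : ∀ α, play σ α ∈ M.Lparity) {e : ℕ} (he : Odd e) :
    WellFounded (Below (f := f) M σ e) := by
  refine wellFounded_iff_isEmpty_descending_chain.2 ⟨fun ⟨h, hdesc⟩ => ?_⟩
  obtain ⟨α, hα⟩ := exists_limit_word hf hdesc
  obtain ⟨K, hK⟩ := M.exists_isLargestRecurring_runColor (play σ α)
  have hmax (n : ℕ) : maxOn (M.runColor (play σ α)) (h n).pos (h (n + 1)).pos = e := by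
    rw [DPA.maxOn_runColor_congr ((h (n + 1)).eqOn_play hf hσ (hα _)), (hdesc n).maxOn_eq]
  obtain ⟨n, heK⟩ :=
    (hK.maxOn_strictMono (strictMono_nat_of_lt_succ fun n => (hdesc n).pos_lt)).1.exists
  obtain rfl : e = K := (hmax n).symm.trans heK
  exact Nat.not_even_iff_odd.2 he (hK.maxEvenInf_iff.1 (hwin α))

end Nodes

theorem rank_le_rank {α : Type*} {r : α → α → Prop} {x y : α} (hx : Acc r x) (hy : Acc r y)
    (h : ∀ z, r z x → r z y) : hx.rank ≤ hy.rank := by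
  rw [hx.rank_eq]
  exact Ordinal.iSup_le fun z => Order.succ_le_iff.2 (hy.rank_lt_of_rel (h z z.2))

section NodeMeasure

variable {Q O : Type*} {I : Type u} {f : ℕ → ℕ} {B : ℕ} {M : DPA Q (I × O)}
  {σ : (ℕ → I) → ℕ → O}

namespace Node

variable (M σ)

open scoped Classical in
/-- The progress measure of a node: its component `e` is the height of the tree of all descents
from that node in steps with largest color `e`, or zero if such trees may be ill-founded. -/
noncomputable def measure (B : ℕ) (h : Node I f) : ParityMeasure.{u} B := toColex fun e =>
  if he : WellFounded (Below (f := f) M σ (e : ℕ)) then (he.apply h).rank else 0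

/-- The possible ends, as far as Player I's letters are known, of runs continuing that of `h` from
its position. -/
def pairs (h : Node I f) : Set (Q × ℕ) :=
  M.reach {M.run (play σ h.word) h.pos} (segment h.word h.pos (h.len - h.pos))

/-- The node below `h` where Player I has produced `y` next and Player O has committed to the run
on the letters known at `h`. -/
def extend (h : Node I f) {y : List I} (hy : total f h.len < h.len + y.length) : Node I f where
  word := splice h.word h.len y
  len := h.len + y.length
  pos := h.len
  total_pos_lt := hy

variable {M σ}

theorem pairs_extend (h : Node I f) {y : List I} (hy : total f h.len < h.len + y.length) :
    (h.extend hy).pairs M σ = M.reach {M.run (play σ (h.extend hy).word) h.len} y := by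
  simp only [pairs, extend, Nat.add_sub_cancel_left, segment_splice]

theorem below_extend (hf : IsDelay f) (h : Node I f) {y : List I}
    (hy : total f h.len < h.len + y.length) :
    Below M σ (maxOn (M.runColor (play σ (h.extend hy).word)) h.pos h.len) (h.extend hy) h :=
  ⟨eqOn_splice .., Nat.le_add_right .., h.pos_lt_len hf, rfl⟩

theorem mem_pairs_extend (hf : IsDelay f) (hσ : IsCausal f σ) (h : Node I f) {y : List I}
    (hy : total f h.len < h.len + y.length) :
    (M.run (play σ (h.extend hy).word) h.len,
      maxOn (M.runColor (play σ (h.extend hy).word)) h.pos h.len) ∈ h.pairs M σ := by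
  have heq : Set.EqOn (h.extend hy).word h.word (Set.Iio h.len) := eqOn_splice ..
  have hlen : h.pos + (h.len - h.pos) = h.len := Nat.add_sub_cancel' (h.pos_lt_len hf).le
  rw [pairs, ← DPA.run_congr (h.eqOn_play hf hσ heq), ← segment_congr (hlen.symm ▸ heq)]
  have hmem := M.mem_reach_run (play σ (h.extend hy).word) h.pos (h.len - h.pos)
  rwa [hlen] at hmem

end Node

theorem Below.progress [Finite Q] (hf : IsDelay f) (hσ : IsCausal f σ)
    (hwin : ∀ α, play σ α ∈ M.Lparity) {c : ℕ} (hc : c < B) {h' h : Node I f}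
    (hbelow : Below M σ c h' h) : Progress c (h.measure M σ B) (h'.measure M σ B) := by
  refine Progress.of_le hc (fun e hce => ?_) fun hodd => ?_
  · simp only [Node.measure, ofColex_toColex]
    split_ifs with hwf
    · refine rank_le_rank _ _ fun z hz => ?_
      simpa only [max_eq_right hce] using hz.trans hf hσ hbelow
    · exact le_rfl
  · have hwf := wellFounded_below hf hσ hwin hodd
    simp only [Node.measure, ofColex_toColex, dif_pos hwf]
    exact (hwf.apply h).rank_lt_of_rel hbelow

theorem IsCausal.exists_win [Finite Q] (hf : IsDelay f) (hσ : IsCausal f σ)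
    (hwin : ∀ α, play σ α ∈ M.Lparity) (hB : ∀ q, M.color q < B) (α : ℕ → I) {l : ℕ}
    (hl : 0 < l) : ∃ θ : ParityMeasure.{u} B, Win M (M.reach {M.init} (segment α 0 l)) θ := by
  refine ⟨_, fun S θ => ∃ h : Node I f, S = h.pairs M σ ∧ θ = h.measure M σ B, ?_,
    ⟨α, l, 0, hl⟩, rfl, rfl⟩
  rintro _ _ ⟨h, rfl, rfl⟩
  refine ⟨total f h.len + 1, fun y hy => ?_⟩
  have hy' : total f h.len < h.len + y.length := by omega
  refine ⟨_, _, h.mem_pairs_extend hf hσ hy', (h.extend hy').measure M σ B,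
    (h.below_extend hf hy').progress hf hσ hwin ?_, h.extend hy', (h.pairs_extend hy').symm, rfl⟩
  obtain ⟨q, hq⟩ := DPA.maxOn_runColor_mem_range (M := M) (play σ (h.extend hy').word)
    (h.pos_lt_len hf).le
  exact hq ▸ hB q

end NodeMeasure

/-! ### From winning sets of pairs to strategies with constant delay -/

section BlockStrategy

variable {I O S : Type*} {F : ℕ}

/-- The `j`-th block of an ω-word that is cut into blocks of length `F`. -/
def block (F : ℕ) (α : ℕ → I) (j : ℕ) : Fin F → I := fun i => α (j * F + i)

theorem block_congr {α α' : ℕ → I} {j : ℕ} (h : Set.EqOn α α' (Set.Iio ((j + 1) * F))) :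
    block F α j = block F α' j := funext fun i => h <| Set.mem_Iio.2 <| by
  rw [Nat.succ_mul]
  exact Nat.add_lt_add_left i.2 _

variable (init : (Fin F → I) → S) (next : S → (Fin F → I) → S)

/-- The states of a transducer that reads an ω-word block by block. -/
def blockState (α : ℕ → I) : ℕ → S
  | 0 => init (block F α 0)
  | j + 1 => next (blockState α j) (block F α (j + 1))

theorem blockState_congr {α α' : ℕ → I} {j : ℕ} (h : Set.EqOn α α' (Set.Iio ((j + 1) * F))) :
    blockState init next α j = blockState init next α' j := by
  induction j with
  | zero => exact congrArg init (block_congr h)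
  | succ j ih =>
    rw [blockState, blockState, block_congr h,
      ih (h.mono (Set.Iio_subset_Iio (Nat.mul_le_mul_right F (j + 1).le_succ)))]

variable (out : S → (Fin F → I) → Fin F → O)

/-- The answers of a transducer with a lookahead of one block: those to a block depend on its state
after that block and on the following block. -/
def blockStrategy (hF : 0 < F) (α : ℕ → I) (n : ℕ) : O :=
  out (blockState init next α (n / F)) (block F α (n / F + 1)) ⟨n % F, Nat.mod_lt n hF⟩

variable {hF : 0 < F}

theorem isCausal_blockStrategy :
    IsCausal (constDelay (2 * F)) (blockStrategy init next out hF) := by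
  intro α α' n h
  rw [total_constDelay_succ] at h
  have hle : (n / F + 1 + 1) * F ≤ 2 * F + n := by
    have := Nat.div_mul_le_self n F
    linarith
  have h' := h.mono (Set.Iio_subset_Iio hle)
  rw [blockStrategy, blockStrategy, block_congr h', blockState_congr init next
    (h'.mono (Set.Iio_subset_Iio (Nat.mul_le_mul_right F (Nat.le_succ _))))]

theorem segment_play_blockStrategy (α : ℕ → I) (j : ℕ) :
    segment (play (blockStrategy init next out hF) α) (j * F) F =
      List.ofFn fun i => (block F α j i,
        out (blockState init next α j) (block F α (j + 1)) i) := by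
  refine congrArg List.ofFn (funext fun i => Prod.ext rfl ?_)
  have hdiv : (j * F + i) / F = j := by
    rw [mul_comm, Nat.mul_add_div hF, Nat.div_eq_of_lt i.2, Nat.add_zero]
  have hmod : (j * F + i) % F = i := by
    rw [mul_comm, Nat.mul_add_mod, Nat.mod_eq_of_lt i.2]
  simp only [play, blockStrategy, hdiv, hmod]

end BlockStrategy

section Commitment

variable {Q I O : Type*} {B F : ℕ}

theorem DPA.run_add_of_foldl_segment {M : DPA Q (I × O)} {x : ℕ → I × O} {p l : ℕ} {t : Q × ℕ}
    (h : (segment x p l).foldl M.transC (M.run x p, M.color (M.run x p)) = t) :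
    M.run x (p + l) = t.1 ∧ maxOn (M.runColor x) p (p + l) = t.2 := by
  rw [M.foldl_transC_segment] at h
  exact Prod.mk.inj h

/-- The memory of Player O at the start of a block: she has committed to a run up to there, so
that the pairs reachable via the block are winning. -/
structure Commitment (M : DPA Q (I × O)) (B F : ℕ) where
  state : Q
  block : Fin F → I
  measure : ParityMeasure.{u} B
  win : Win M (M.reach {state} (List.ofFn block)) measure

/-- Player O can answer a block by `b` so as to reach the commitment `s'`, with the largest color
`c` on the way. -/
def Commitment.Step {M : DPA Q (I × O)} (s : Commitment.{u} M B F) (b : Fin F → O) (c : ℕ)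
    (s' : Commitment.{u} M B F) : Prop :=
  (List.ofFn fun i => (s.block i, b i)).foldl M.transC (s.state, M.color s.state) = (s'.state, c) ∧
    Progress c s.measure s'.measure

theorem Commitment.exists_step [Fintype Q] [Nonempty I] {M : DPA Q (I × O)}
    (s : Commitment.{u} M B (blockLen M)) (w : Fin (blockLen M) → I) :
    ∃ s' : Commitment.{u} M B (blockLen M), s'.block = w ∧ ∃ b c, s.Step b c s' := by
  obtain ⟨q, c, hq, θ, hp, hwin⟩ :=
    s.win.exists_of_length_eq_blockLen (M.reach_subset_validPairs _ _) (List.length_ofFn (f := w))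
  obtain ⟨b, hb⟩ := M.exists_answers_of_mem_reach hq
  exact ⟨⟨q, w, θ, hwin⟩, rfl, b, c, hb, hp⟩

theorem mem_Lparity_of_step [Finite Q] {M : DPA Q (I × O)} (hF : 0 < F) {x : ℕ → I × O}
    {s : ℕ → Commitment.{u} M B F} {b : ℕ → Fin F → O} {c : ℕ → ℕ} (h0 : (s 0).state = M.init)
    (hx : ∀ j, segment x (j * F) F = List.ofFn fun i => ((s j).block i, b j i))
    (hstep : ∀ j, (s j).Step (b j) (c j) (s (j + 1))) : x ∈ M.Lparity := by
  have hrun (j : ℕ) : M.run x (j * F) = (s j).state := by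
    induction j with
    | zero => rw [Nat.zero_mul, h0, DPA.run]
    | succ j ih =>
      rw [Nat.succ_mul]
      exact (DPA.run_add_of_foldl_segment (by rw [hx, ih, (hstep j).1])).1
  have hmax (j : ℕ) : maxOn (M.runColor x) (j * F) ((j + 1) * F) = c j := by
    rw [Nat.succ_mul]
    exact (DPA.run_add_of_foldl_segment (by rw [hx, hrun, (hstep j).1])).2
  obtain ⟨K, hK⟩ := M.exists_isLargestRecurring_runColor x
  refine hK.maxEvenInf_iff.2 (Progress.even_of_isLargestRecurring
    (θ := fun j => (s j).measure) (fun j => ?_)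
    (hK.maxOn_strictMono (strictMono_mul_right_of_pos hF)))
  rw [hmax]
  exact (hstep j).2

theorem winsO_constDelay_of_win [Fintype Q] [Nonempty I] {M : DPA Q (I × O)}
    (h : ∀ α : ℕ → I, ∃ θ : ParityMeasure.{u} B,
      Win M (M.reach {M.init} (segment α 0 (blockLen M))) θ) :
    WinsO (constDelay (2 * blockLen M)) M.Lparity := by
  have hF := blockLen_pos M
  have hinit (w : Fin (blockLen M) → I) :
      ∃ s : Commitment.{u} M B (blockLen M), s.state = M.init ∧ s.block = w := by
    obtain ⟨a⟩ := ‹Nonempty I›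
    obtain ⟨θ, hθ⟩ := h (splice (fun _ => a) 0 (List.ofFn w))
    have hw := segment_splice (fun _ => a) 0 (List.ofFn w)
    rw [List.length_ofFn] at hw
    exact ⟨⟨M.init, w, θ, hw ▸ hθ⟩, rfl, rfl⟩
  choose init hstate hblock using hinit
  choose next hnext out col hstep using
    Commitment.exists_step (M := M) (B := B)
  refine (isCausal_blockStrategy init next out (hF := hF)).winsO
    (isDelay_constDelay (by omega)) fun α => ?_
  have hblocks (j : ℕ) : (blockState init next α j).block = block (blockLen M) α j := by
    cases j with
    | zero => exact hblock _
    | succ j => exact hnext _ _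
  refine mem_Lparity_of_step hF (s := blockState init next α)
    (hstate _) (fun j => ?_) fun j => hstep _ (block (blockLen M) α (j + 1))
  rw [segment_play_blockStrategy, hblocks]

end Commitment

/-! ### The bound -/

section Bound

theorem mul_nine_pow_le (n : ℕ) : n * 9 ^ n ≤ 16 ^ n := by
  induction n with
  | zero => simp
  | succ n ih =>
    rcases Nat.lt_or_ge n 2 with hn | hn
    · interval_cases n <;> norm_num
    · calc (n + 1) * 9 ^ (n + 1) = 9 * (n + 1) * 9 ^ n := by ring
        _ ≤ 16 * n * 9 ^ n := by gcongr ?_ * _; omega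
        _ = 16 * (n * 9 ^ n) := by ring
        _ ≤ 16 * 16 ^ n := Nat.mul_le_mul_left 16 ih
        _ = 16 ^ (n + 1) := by ring

theorem two_mul_succ_sq_le {k : ℕ} (hk : 3 ≤ k) : 2 * (k + 1) ^ 2 ≤ 4 ^ k := by
  induction k, hk using Nat.le_induction with
  | base => norm_num
  | succ k hk ih =>
    rw [pow_succ 4 k]
    nlinarith

theorem mul_succ_pow_le (n : ℕ) {k : ℕ} (hk : 2 ≤ k) :
    n * (k + 1) ^ (2 * n) ≤ 2 ^ (2 * n * k) := by
  have hpow : 2 ^ (2 * n * k) = (4 ^ k) ^ n := by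
    rw [← pow_mul, show 4 = 2 ^ 2 by norm_num, ← pow_mul]
    congr 1
    ring
  rw [hpow, pow_mul (k + 1)]
  rcases hk.eq_or_lt with rfl | hk
  · exact mul_nine_pow_le n
  · calc n * ((k + 1) ^ 2) ^ n ≤ 2 ^ n * ((k + 1) ^ 2) ^ n :=
          Nat.mul_le_mul_right _ Nat.lt_two_pow_self.le
      _ = (2 * (k + 1) ^ 2) ^ n := (mul_pow ..).symm
      _ ≤ (4 ^ k) ^ n := Nat.pow_le_pow_left (two_mul_succ_sq_le hk) n

variable {Q I O : Type*} [Fintype Q] {M : DPA Q (I × O)}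

theorem two_mul_blockLen_le (hk : 2 ≤ M.numColors) :
    2 * blockLen M ≤ 2 ^ (2 * Fintype.card Q * M.numColors + 2) := by
  have := mul_succ_pow_le (Fintype.card Q) hk
  rw [blockLen, choiceLen, pow_add]
  omega

theorem DPA.mem_Lparity_iff_even_of_numColors_le_one (hk : M.numColors ≤ 1) (x : ℕ → I × O) :
    x ∈ M.Lparity ↔ Even (M.color M.init) := by
  have hconst : M.runColor x = fun _ => M.color M.init := funext fun n =>
    Finset.card_le_one.1 hk _ (Finset.mem_image_of_mem _ (Finset.mem_univ _)) _
      (Finset.mem_image_of_mem _ (Finset.mem_univ _))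
  have hrec : IsLargestRecurring (M.runColor x) (M.color M.init) :=
    ⟨.of_forall (congrFun hconst), .of_forall fun n => (congrFun hconst n).le⟩
  exact hrec.maxEvenInf_iff

end Bound

theorem stmt13_general {Q I O : Type*} [Fintype Q] (M : DPA Q (I × O)) :
    (∃ f, IsDelay f ∧ WinsO f M.Lparity) ↔
      (∃ f, IsDelay f ∧ IsConstant f ∧
        f 0 ≤ 2 ^ (2 * Fintype.card Q * M.numColors + 2) + 2 ∧ WinsO f M.Lparity) := by
  refine ⟨fun ⟨f, hf, hwins⟩ => ?_, fun ⟨f, hf, _, _, hwins⟩ => ⟨f, hf, hwins⟩⟩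
  obtain ⟨σ, hσ, hwin⟩ := hwins.exists_isCausal
  by_cases hall : ∀ x, x ∈ M.Lparity
  · obtain ⟨τ, -⟩ := hwins
    exact ⟨constDelay 1, isDelay_constDelay le_rfl, isConstant_constDelay 1, by simp [constDelay],
      τ, fun _ _ _ _ _ _ => hall _⟩
  obtain ⟨x, hx⟩ := not_forall.1 hall
  have : Nonempty I := ⟨(x 0).1⟩
  have hk : 2 ≤ M.numColors := by
    by_contra! hk
    have := M.mem_Lparity_iff_even_of_numColors_le_one (Nat.lt_succ_iff.1 hk)
    exact hx ((this x).2 ((this _).1 (hwin fun i => (x i).1)))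
  obtain ⟨B, hB⟩ := (Set.finite_range M.color).bddAbove
  have hpos := blockLen_pos M
  have hwins : WinsO (constDelay (2 * blockLen M)) M.Lparity :=
    winsO_constDelay_of_win (B := B + 1) fun α =>
      hσ.exists_win hf hwin (fun q => Nat.lt_succ_of_le (hB ⟨q, rfl⟩)) α hpos
  exact ⟨constDelay (2 * blockLen M), isDelay_constDelay (by omega), isConstant_constDelay _,
    (two_mul_blockLen_le hk).trans (Nat.le_add_right _ 2), hwins⟩

/-- for `L = L_p(A)` with `A` a deterministic parity automaton
using `k` colors, Player O wins `Γ_f(L)` for some delay function `f` iff she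
wins `Γ_f(L)` for some constant delay function `f` with
`f(0) ≤ 2^{2|A|k + 2} + 2`. -/
theorem stmt13 {Q I O : Type*} [Fintype Q] [Fintype I] [Fintype O]
    [Nonempty I] [Nonempty O] (M : DPA Q (I × O)) (k : ℕ)
    (hk : k = M.numColors) :
    (∃ f, IsDelay f ∧ WinsO f M.Lparity) ↔
      (∃ f, IsDelay f ∧ IsConstant f ∧
        f 0 ≤ 2 ^ (2 * Fintype.card Q * k + 2) + 2 ∧ WinsO f M.Lparity) := by
  subst hk
  exact stmt13_general M

end DelayGames
end

section
/- Let A be an acyclic nondeterministic finite automaton over Σ_I × Σ_O of depth k, and let L = L_*(A)·(Σ_I × Σ_O)^ω. Then the projection pr_I(L) to the first components is universal (equals Σ_I^ω) if and only if every word w ∈ Σ_I^k has a prefix in L_*(pr_I(A)), where pr_I(A) is the automaton obtained from A by projecting each transition label to its first component. -/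
namespace DelayGames

section OmegaWords

variable {A B : Type*}

@[simp]
theorem length_pre (x : ℕ → A) (k : ℕ) : (pre x k).length = k := by
  simp [pre]

theorem map_pre (f : A → B) (x : ℕ → A) (k : ℕ) : (pre x k).map f = pre (fun n => f (x n)) k :=
  List.map_map

theorem pre_prodMk (x : ℕ → A) (y : ℕ → B) (k : ℕ) :
    pre (fun n => (x n, y n)) k = (pre x k).zip (pre y k) :=
  List.zip_map'.symm

theorem prefix_pre_iff {p : List A} {x : ℕ → A} {k : ℕ} :
    p <+: pre x k ↔ ∃ j ≤ k, pre x j = p := by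
  have take_pre (j : ℕ) : (pre x k).take j = pre x (min j k) := by
    simp only [pre, ← List.map_take, List.take_range]
  constructor
  · intro hp
    have hle : p.length ≤ k := by simpa only [length_pre] using hp.length_le
    refine ⟨p.length, hle, ?_⟩
    rw [List.prefix_iff_eq_take.1 hp, take_pre, length_pre, min_eq_left hle]
  · rintro ⟨j, hj, rfl⟩
    rw [← min_eq_left hj, ← take_pre]
    exact List.take_prefix j _

theorem exists_pre_eq [Nonempty A] (w : List A) : ∃ x : ℕ → A, pre x w.length = w := by
  obtain ⟨a⟩ := ‹Nonempty A›
  refine ⟨fun n => w.getD n a, List.ext_getElem (length_pre _ _) fun n _ hn => ?_⟩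
  simp [pre, hn]

theorem mem_extOmega_iff_of_length_le {K : Set (List A)} {k : ℕ} (hK : ∀ w ∈ K, w.length ≤ k)
    {x : ℕ → A} : x ∈ extOmega K ↔ ∃ p, p <+: pre x k ∧ p ∈ K := by
  constructor
  · rintro ⟨j, hj⟩
    have hjk : j ≤ k := by simpa only [length_pre] using hK _ hj
    exact ⟨pre x j, prefix_pre_iff.2 ⟨j, hjk, rfl⟩, hj⟩
  · rintro ⟨p, hp, hpK⟩
    obtain ⟨j, -, rfl⟩ := prefix_pre_iff.1 hp
    exact ⟨j, hpK⟩

theorem extOmega_eq_univ_iff_of_length_le [Nonempty A] {K : Set (List A)} {k : ℕ}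
    (hK : ∀ w ∈ K, w.length ≤ k) :
    extOmega K = Set.univ ↔ ∀ w : List A, w.length = k → ∃ p, p <+: w ∧ p ∈ K := by
  simp only [Set.eq_univ_iff_forall, mem_extOmega_iff_of_length_le hK]
  constructor
  · rintro h w rfl
    obtain ⟨x, hx⟩ := exists_pre_eq w
    exact hx ▸ h x
  · exact fun h x => h (pre x k) (length_pre x k)

end OmegaWords

theorem projL_extOmega {I O : Type*} [Nonempty O] (K : Set (List (I × O))) :
    projL (extOmega K) = extOmega (List.map Prod.fst '' K) := by
  ext α
  constructor
  · rintro ⟨β, k, hk⟩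
    exact ⟨k, _, hk, map_pre Prod.fst _ k⟩
  · rintro ⟨k, v, hv, hvα⟩
    have hlen : v.length = k := by
      simpa only [List.length_map, length_pre] using congrArg List.length hvα
    obtain ⟨β, hβ⟩ := exists_pre_eq (v.map Prod.snd)
    rw [List.length_map, hlen] at hβ
    have hpre : pre (fun n => (α n, β n)) k = v := by
      rw [pre_prodMk, ← hvα, hβ, ← List.unzip_fst, ← List.unzip_snd, List.zip_unzip]
    exact ⟨β, k, hpre ▸ hv⟩

namespace NA

theorem mem_reach_append_singleton {Q A : Type*} (M : NA Q A) {S : Set Q} {w : List A} {a : A}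
    {q : Q} : q ∈ M.reach S (w ++ [a]) ↔ ∃ p ∈ M.reach S w, q ∈ M.trans p a := by
  simp only [reach, List.foldl_append, List.foldl_cons, List.foldl_nil, Set.mem_iUnion, exists_prop]

variable {Q I O : Type*} [Nonempty O] (M : NA Q (I × O))

theorem mem_trans_projI {p q : Q} {a : I} :
    q ∈ M.projI.trans p a ↔ ∃ b, q ∈ M.trans p (a, b) :=
  Set.mem_iUnion

theorem mem_reach_projI {S : Set Q} {w : List I} {q : Q} :
    q ∈ M.projI.reach S w ↔ ∃ v : List (I × O), v.map Prod.fst = w ∧ q ∈ M.reach S v := by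
  induction w using List.reverseRecOn generalizing q with
  | nil => simp [reach]
  | append_singleton w a ih =>
    simp only [mem_reach_append_singleton, mem_trans_projI, ih]
    constructor
    · rintro ⟨p, ⟨v, rfl, hp⟩, b, hq⟩
      exact ⟨v ++ [(a, b)], List.map_append, M.mem_reach_append_singleton.2 ⟨p, hp, hq⟩⟩
    · rintro ⟨_, hv, hq⟩
      obtain ⟨v, _, rfl, rfl, hlast⟩ := List.map_eq_append_iff.1 hv
      obtain ⟨⟨_, b⟩, rfl, rfl⟩ := List.map_eq_singleton_iff.1 hlast
      obtain ⟨p, hp, hpq⟩ := M.mem_reach_append_singleton.1 hq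
      exact ⟨p, ⟨v, rfl, hp⟩, b, hpq⟩

theorem Lstar_projI : M.projI.Lstar = List.map Prod.fst '' M.Lstar := by
  ext w
  constructor
  · rintro ⟨q, hq, hacc⟩
    obtain ⟨v, hv, hvq⟩ := M.mem_reach_projI.1 hq
    exact ⟨v, ⟨q, hvq, hacc⟩, hv⟩
  · rintro ⟨v, ⟨q, hq, hacc⟩, hv⟩
    exact ⟨q, M.mem_reach_projI.2 ⟨v, hv, hq⟩, hacc⟩

end NA

theorem stmt16_general {Q I O : Type*} [Nonempty I] [Nonempty O] (M : NA Q (I × O)) (k : ℕ)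
    (hk : ∀ w ∈ M.Lstar, w.length ≤ k) :
    projL (extOmega M.Lstar) = Set.univ ↔
      ∀ w : List I, w.length = k → ∃ p, p <+: w ∧ p ∈ M.projI.Lstar := by
  have hproj : ∀ w ∈ M.projI.Lstar, w.length ≤ k := by
    rw [M.Lstar_projI]
    rintro _ ⟨v, hv, rfl⟩
    exact List.length_map Prod.fst ▸ hk v hv
  rw [projL_extOmega, ← M.Lstar_projI, extOmega_eq_univ_iff_of_length_le hproj]

/-- for an acyclic NFA `A` over `Σ_I × Σ_O` of depth `k` and
`L = L_*(A)·(Σ_I × Σ_O)^ω`, the projection `pr_I(L)` is universal iff every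
word `w ∈ Σ_I^k` has a prefix in `L_*(pr_I(A))`. -/
theorem stmt16 {Q I O : Type*} [Fintype Q] [Fintype I] [Fintype O]
    [Nonempty I] [Nonempty O] (M : NA Q (I × O)) (hacyc : M.Acyclic)
    (k : ℕ) (hdepth : M.HasDepth k) :
    projL (extOmega M.Lstar) = Set.univ ↔
      ∀ w : List I, w.length = k → ∃ p, p <+: w ∧ p ∈ (M.projI).Lstar :=
  stmt16_general M k hdepth.1

end DelayGames
end
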